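/- Let J₁ be a closed subinterval of (a₁,b₁) and suppose μ₁ is absolutely continuous (with respect to Lebesgue measure) in an open neighborhood of J₁, with density μ₁′ bounded from below there by a positive constant. Then there exists a constant C₁ > 0, independent of j and n, such that λ_{j,2n}^{(1)} ≥ C₁/n whenever 1 ≤ j ≤ n and x_{j,2n} ∈ J₁. -/

import Mathlib

open MeasureTheory

/-- The data of the diagonal type II multiple orthogonal polynomial for an
Angelesco system with two intervals: its `2n` zeros, listed in increasing
order, with `n` of them in `(a₁,b₁)` and `n` of them in `(a₂,b₂)`, and the
multiple orthogonality conditions. -/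
structure Angelesco (μ₁ μ₂ : Measure ℝ) (a₁ b₁ a₂ b₂ : ℝ) (n : ℕ) where
  x : Fin (2 * n) → ℝ
  mono : StrictMono x
  mem1 : ∀ i : Fin (2 * n), (i : ℕ) < n → x i ∈ Set.Ioo a₁ b₁
  mem2 : ∀ i : Fin (2 * n), n ≤ (i : ℕ) → x i ∈ Set.Ioo a₂ b₂
  orth1 : ∀ k < n, ∫ t, (∏ i, (t - x i)) * t ^ k ∂μ₁ = 0
  orth2 : ∀ k < n, ∫ t, (∏ i, (t - x i)) * t ^ k ∂μ₂ = 0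

/-- The quadrature weight `λ_{k,2n}^{(μ)} = ∫ ℓ_{k,2n} dμ`, where `ℓ_{k,2n}` is the
`k`-th fundamental Lagrange polynomial for the nodes `x_{1,2n} < ⋯ < x_{2n,2n}`. -/
noncomputable def qweight {μ₁ μ₂ : Measure ℝ} {a₁ b₁ a₂ b₂ : ℝ} {n : ℕ}
    (ad : Angelesco μ₁ μ₂ a₁ b₁ a₂ b₂ n) (μ : Measure ℝ) (k : Fin (2 * n)) : ℝ :=
  ∫ t, (Lagrange.basis Finset.univ ad.x k).eval t ∂μ

open Polynomial in
lemma cheb_expand (m : ℕ) : ∀ F : ℝ[X], F.natDegree ≤ m →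
    ∃ a : ℕ → ℝ, F = ∑ k ∈ Finset.range (m + 1), Polynomial.C (a k) * Chebyshev.T ℝ (k : ℤ) := by
  induction m with
  | zero =>
    intro F hF
    refine ⟨fun _ => F.coeff 0, ?_⟩
    simp only [zero_add, Finset.sum_range_one]
    simpa using Polynomial.eq_C_of_natDegree_le_zero hF
  | succ m ih =>
    intro F hF
    have hT : (Chebyshev.T ℝ ((m + 1 : ℕ) : ℤ)).natDegree = m + 1 := by
      rw [Chebyshev.natDegree_T]; simp; omega
    have hc : (Chebyshev.T ℝ ((m + 1 : ℕ) : ℤ)).coeff (m + 1) ≠ 0 := by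
      intro h
      have h2 : (Chebyshev.T ℝ ((m + 1 : ℕ) : ℤ)).leadingCoeff = 0 := by
        rw [leadingCoeff, hT, h]
      rw [leadingCoeff_eq_zero] at h2
      rw [h2] at hT
      simp at hT
    set c := F.coeff (m + 1) / (Chebyshev.T ℝ ((m + 1 : ℕ) : ℤ)).coeff (m + 1) with hcdef
    obtain ⟨a, ha⟩ := ih (F - Polynomial.C c * Chebyshev.T ℝ ((m + 1 : ℕ) : ℤ)) (by
      rw [natDegree_le_iff_coeff_eq_zero]
      intro N hN
      rw [coeff_sub, coeff_C_mul]
      rcases Nat.eq_or_lt_of_le (Nat.succ_le_of_lt hN) with h | h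
      · rw [← h, hcdef, Nat.succ_eq_add_one]; field_simp; simp
      · rw [coeff_eq_zero_of_natDegree_lt (by omega), coeff_eq_zero_of_natDegree_lt (by omega)]
        simp)
    refine ⟨fun k => if k = m + 1 then c else a k, ?_⟩
    rw [Finset.sum_range_succ]
    rw [Finset.sum_congr rfl (g := fun k => Polynomial.C (a k) * Chebyshev.T ℝ (k : ℤ))]
    · rw [← ha]; simp
    · intro k hk
      rw [Finset.mem_range] at hk
      simp only []
      rw [if_neg (by omega)]

open Polynomial in
lemma cheb_norm (m : ℕ) (a : ℕ → ℝ) :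
    Real.pi / 2 * ∑ k ∈ Finset.range (m + 1), a k ^ 2 ≤
    ∫ x, (∑ k ∈ Finset.range (m + 1), a k * (Chebyshev.T ℝ (k : ℤ)).eval x) ^ 2
      ∂Chebyshev.measureT := by
  have h1 : ∀ x : ℝ, (∑ k ∈ Finset.range (m + 1), a k * (Chebyshev.T ℝ (k : ℤ)).eval x) ^ 2 =
      ∑ k ∈ Finset.range (m + 1), ∑ l ∈ Finset.range (m + 1),
        (a k * a l) * ((Chebyshev.T ℝ (k : ℤ)).eval x * (Chebyshev.T ℝ (l : ℤ)).eval x) := by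
    intro x
    rw [sq, Finset.sum_mul_sum]
    refine Finset.sum_congr rfl fun k _ => Finset.sum_congr rfl fun l _ => by ring
  simp_rw [h1]
  rw [integral_finsetSum _ (fun k _ => Chebyshev.integrable_measureT (by fun_prop))]
  rw [Finset.mul_sum]
  refine Finset.sum_le_sum fun k hk => ?_
  rw [integral_finsetSum _ (fun k _ => Chebyshev.integrable_measureT (by fun_prop))]
  simp_rw [MeasureTheory.integral_const_mul]
  rw [Finset.sum_eq_single k]
  · by_cases h0 : k = 0
    · subst h0
      have := Chebyshev.integral_eval_T_real_mul_self_measureT_zero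
      simp only [Nat.cast_zero] at *
      rw [this]
      nlinarith [Real.pi_pos, sq_nonneg (a 0)]
    · rw [Chebyshev.integral_T_real_mul_self_measureT_of_ne_zero h0]
      apply le_of_eq; ring
  · intro l _ hl
    rw [Chebyshev.integral_eval_T_real_mul_eval_T_real_measureT_of_ne (Ne.symm hl)]; simp
  · intro h; exact absurd hk h

open Polynomial in
lemma cheb_point (m : ℕ) (F : ℝ[X]) (hF : F.natDegree ≤ m) :
    (F.eval 0) ^ 2 ≤ (m + 1) * ∫ x, (F.eval x) ^ 2 ∂Chebyshev.measureT := by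
  obtain ⟨a, ha⟩ := cheb_expand m F hF
  have he : ∀ x : ℝ, F.eval x =
      ∑ k ∈ Finset.range (m + 1), a k * (Chebyshev.T ℝ (k : ℤ)).eval x := by
    intro x
    conv_lhs => rw [ha]
    simp [eval_finsetSum]
  have h1 := cheb_norm m a
  simp_rw [← he] at h1
  have h2 : (F.eval 0) ^ 2 ≤ (m + 1) * ∑ k ∈ Finset.range (m + 1), a k ^ 2 := by
    rw [he]
    refine (sq_sum_le_card_mul_sum_sq).trans ?_
    rw [Finset.card_range]
    push_cast
    refine mul_le_mul_of_nonneg_left (Finset.sum_le_sum fun k _ => ?_) (by positivity)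
    rw [mul_pow]
    have := Chebyshev.abs_eval_T_real_le_one (k : ℤ) (x := 0) (by simp)
    have h3 : (eval 0 (Chebyshev.T ℝ (k : ℤ))) ^ 2 ≤ 1 := by
      rw [← sq_abs]; exact pow_le_one₀ (abs_nonneg _) this
    nlinarith [sq_nonneg (a k)]
  refine h2.trans (mul_le_mul_of_nonneg_left (le_trans ?_ h1) (by positivity))
  have h4 : 0 ≤ ∑ k ∈ Finset.range (m + 1), a k ^ 2 := Finset.sum_nonneg fun _ _ => sq_nonneg _
  nlinarith [Real.pi_gt_three]

open Polynomial in
lemma leb_point (m : ℕ) (G : ℝ[X]) (hG : G.natDegree ≤ m) :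
    (G.eval 0) ^ 2 ≤ (m + 3) * ∫ x in (-1 : ℝ)..1, (G.eval x) ^ 2 := by
  have h := cheb_point (m + 2) (G * (1 - X ^ 2)) (by
    refine natDegree_mul_le.trans (add_le_add hG ?_)
    compute_degree)
  have e : ((m + 2 : ℕ) : ℝ) + 1 = m + 3 := by push_cast; ring
  rw [e] at h
  have h0 : (eval 0 (G * (1 - X ^ 2))) = eval 0 G := by simp
  rw [h0] at h
  refine h.trans (mul_le_mul_of_nonneg_left ?_ (by positivity))
  rw [Chebyshev.integral_measureT]
  refine intervalIntegral.integral_mono_on (by norm_num) ?_ ?_ ?_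
  · exact Chebyshev.intervalIntegrable_sqrt_one_sub_sq_inv.continuousOn_mul (by fun_prop)
  · exact (by fun_prop : Continuous fun x : ℝ => (G.eval x) ^ 2).intervalIntegrable _ _
  · intro x hx
    have hy : 0 ≤ 1 - x ^ 2 := by nlinarith [hx.1, hx.2]
    have hs := Real.sqrt_nonneg (1 - x ^ 2)
    have hs2 := Real.sq_sqrt hy
    have hs1 : √(1 - x ^ 2) ≤ 1 := by
      exact Real.sqrt_le_iff.mpr ⟨by norm_num, by nlinarith [sq_nonneg x]⟩
    simp only [eval_mul, eval_sub, eval_one, eval_pow, eval_X, Real.sqrt_inv]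
    have : (1 - x ^ 2) ^ 2 * (√(1 - x ^ 2))⁻¹ ≤ 1 := by
      set s := √(1 - x ^ 2)
      rw [← hs2]
      rcases eq_or_lt_of_le hs with h | h
      · rw [← h]; simp
      · have : (s ^ 2) ^ 2 * s⁻¹ = s ^ 3 := by field_simp
        rw [this]
        exact pow_le_one₀ hs hs1
    calc (eval x G * (1 - x ^ 2)) ^ 2 * (√(1 - x ^ 2))⁻¹
        = eval x G ^ 2 * ((1 - x ^ 2) ^ 2 * (√(1 - x ^ 2))⁻¹) := by ring
      _ ≤ _ := by nlinarith [sq_nonneg (eval x G)]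

open Polynomial in
lemma leb_point' (m : ℕ) (F : ℝ[X]) (hF : F.natDegree ≤ m) (x₀ δ : ℝ) (hδ : 0 < δ) :
    δ * (F.eval x₀) ^ 2 ≤ (m + 3) * ∫ x in (x₀ - δ)..(x₀ + δ), (F.eval x) ^ 2 := by
  have h := leb_point m (F.comp (Polynomial.C δ * X + Polynomial.C x₀)) (by
    rw [natDegree_comp]
    refine (Nat.mul_le_mul hF (natDegree_linear_le)).trans (by simp))
  simp only [eval_comp, eval_add, eval_mul, eval_C, eval_X, mul_zero, zero_add] at h
  rw [intervalIntegral.integral_comp_mul_add (fun y => (F.eval y) ^ 2) hδ.ne' x₀] at h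
  have e1 : δ * -1 + x₀ = x₀ - δ := by ring
  have e2 : δ * 1 + x₀ = x₀ + δ := by ring
  rw [e1, e2, smul_eq_mul] at h
  have := mul_le_mul_of_nonneg_left h hδ.le
  refine this.trans (le_of_eq ?_)
  field_simp

open Polynomial in
lemma poly_integrable (μ : Measure ℝ) (hmom : ∀ k : ℕ, Integrable (fun t : ℝ => t ^ k) μ)
    (F : ℝ[X]) : Integrable (fun t => F.eval t) μ := by
  simp_rw [eval_eq_sum_range]
  exact integrable_finsetSum _ fun k _ => (hmom k).const_mul _

open Polynomial in
lemma orth_poly (μ : Measure ℝ) (hmom : ∀ k : ℕ, Integrable (fun t : ℝ => t ^ k) μ)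
    (P V : ℝ[X]) (n : ℕ) (hV : V.natDegree < n)
    (horth : ∀ k < n, ∫ t, P.eval t * t ^ k ∂μ = 0) :
    ∫ t, P.eval t * V.eval t ∂μ = 0 := by
  simp_rw [eval_eq_sum_range' hV, Finset.mul_sum]
  rw [integral_finsetSum]
  · refine Finset.sum_eq_zero fun k hk => ?_
    have : ∀ t : ℝ, P.eval t * (V.coeff k * t ^ k) = V.coeff k * (P.eval t * t ^ k) :=
      fun t => by ring
    simp_rw [this]
    rw [integral_const_mul, horth k (Finset.mem_range.mp hk), mul_zero]
  · intro k _
    have := poly_integrable μ hmom (P * (C (V.coeff k) * X ^ k))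
    simpa using this

/-- The weight factor coming from the zeros in the second interval. -/
noncomputable def angW {n : ℕ} (x : Fin (2 * n) → ℝ) (j : Fin (2 * n)) : Polynomial ℝ :=
  ∏ i ∈ Finset.univ.filter (fun i : Fin (2 * n) => ¬ (i : ℕ) < n),
    Lagrange.basisDivisor (x j) (x i)

/-- The fundamental polynomial on the first `n` nodes. -/
noncomputable def angR {n : ℕ} (x : Fin (2 * n) → ℝ) (j : Fin (2 * n)) : Polynomial ℝ :=
  Lagrange.basis (Finset.univ.filter (fun i : Fin (2 * n) => (i : ℕ) < n)) x j

lemma card_low (n : ℕ) :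
    (Finset.univ.filter (fun i : Fin (2 * n) => (i : ℕ) < n)).card = n := by
  rw [Fin.card_filter_val_lt]; omega

lemma card_high (n : ℕ) :
    (Finset.univ.filter (fun i : Fin (2 * n) => ¬ (i : ℕ) < n)).card = n := by
  have := Finset.card_filter_add_card_filter_not (s := (Finset.univ : Finset (Fin (2 * n))))
    (fun i : Fin (2 * n) => (i : ℕ) < n)
  rw [card_low] at this
  simp only [Finset.card_univ, Fintype.card_fin] at this
  omega

lemma basis_split {n : ℕ} (x : Fin (2 * n) → ℝ) (j : Fin (2 * n)) (hj : (j : ℕ) < n) :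
    Lagrange.basis Finset.univ x j = angR x j * angW x j := by
  unfold angR angW Lagrange.basis
  rw [← Finset.prod_filter_mul_prod_filter_not (Finset.univ.erase j)
    (fun i : Fin (2 * n) => (i : ℕ) < n)]
  congr 1
  · apply Finset.prod_congr _ (fun _ _ => rfl)
    ext i; simp
  · apply Finset.prod_congr _ (fun _ _ => rfl)
    ext i; simp
    intro h h2; subst h2; omega

open Polynomial in
lemma qweight_eq {μ₁ μ₂ : Measure ℝ} {a₁ b₁ a₂ b₂ : ℝ} {n : ℕ}
    (hmom₁ : ∀ k : ℕ, Integrable (fun t : ℝ => t ^ k) μ₁)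
    (ad : Angelesco μ₁ μ₂ a₁ b₁ a₂ b₂ n) (j : Fin (2 * n)) (hj : (j : ℕ) < n) :
    qweight ad μ₁ j =
      ∫ t, ((angR ad.x j).eval t) ^ 2 * (angW ad.x j).eval t ∂μ₁ := by
  set R := angR ad.x j with hR
  set W := angW ad.x j with hW
  set P : ℝ[X] := ∏ i, (X - Polynomial.C (ad.x i)) with hP
  have hR1 : R.eval (ad.x j) = 1 :=
    Lagrange.eval_basis_self (ad.mono.injective.injOn) (by simpa using hj)
  have hRd : R.natDegree = n - 1 := by
    have := Lagrange.degree_basis (s := Finset.univ.filter (fun i : Fin (2 * n) => (i : ℕ) < n))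
      (v := ad.x) (i := j) (ad.mono.injective.injOn) (by simpa using hj)
    rw [card_low] at this
    exact natDegree_eq_of_degree_eq_some this
  obtain ⟨c, hc⟩ : ∃ c : ℝ, (X - Polynomial.C (ad.x j)) * (R * W) = Polynomial.C c * P := by
    refine ⟨∏ i ∈ Finset.univ.erase j, (ad.x j - ad.x i)⁻¹, ?_⟩
    rw [hR, hW, ← basis_split _ _ hj, Lagrange.basis]
    simp only [Lagrange.basisDivisor, Finset.prod_mul_distrib]
    rw [hP, ← Finset.mul_prod_erase Finset.univ _ (Finset.mem_univ j), map_prod]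
    ring
  set V := (R - 1) /ₘ (X - Polynomial.C (ad.x j)) with hV
  have hVe : (X - Polynomial.C (ad.x j)) * V = R - 1 := by
    rw [hV, mul_divByMonic_eq_iff_isRoot]
    simp [IsRoot, hR1]
  have hVd : V.natDegree < n := by
    rw [hV, natDegree_divByMonic _ (monic_X_sub_C _), natDegree_X_sub_C]
    have : (R - 1).natDegree ≤ n - 1 := by
      refine (natDegree_sub_le _ _).trans ?_
      simp [hRd]
    omega
  have horth := orth_poly μ₁ hmom₁ P V n hVd (by
    intro k hk
    have := ad.orth1 k hk
    simpa [hP, eval_prod] using this)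
  have key : R ^ 2 * W = R * W + Polynomial.C c * (P * V) := by
    have : R ^ 2 * W = R * W + (R - 1) * (R * W) := by ring
    rw [this, ← hVe]
    linear_combination V * hc
  unfold qweight
  rw [basis_split _ _ hj]
  have : ∀ t : ℝ, (R.eval t) ^ 2 * W.eval t = (R * W).eval t + c * (P.eval t * V.eval t) := by
    intro t
    have := congrArg (eval t) key
    simpa using this
  simp_rw [this]
  rw [integral_add (poly_integrable _ hmom₁ _), integral_const_mul, horth]
  · simp [hR, hW]
  · have := poly_integrable _ hmom₁ (Polynomial.C c * (P * V))
    simpa using this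

/-- Polynomial minorant of the square root of the weight. -/
noncomputable def angS {n : ℕ} (x : Fin (2 * n) → ℝ) (j : Fin (2 * n)) : Polynomial ℝ :=
  ∏ i ∈ Finset.univ.filter (fun i : Fin (2 * n) => ¬ (i : ℕ) < n),
    (Lagrange.basisDivisor (x j) (x i) *
      (1 + Polynomial.C ((x i - x j)⁻¹ / 2) * (Polynomial.X - Polynomial.C (x j))))

open Polynomial in
lemma angS_natDegree {n : ℕ} (x : Fin (2 * n) → ℝ) (j : Fin (2 * n)) :
    (angS x j).natDegree ≤ 2 * n := by
  unfold angS
  refine (natDegree_prod_le _ _).trans ?_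
  refine (Finset.sum_le_card_nsmul _ _ 2 ?_).trans ?_
  · intro i _
    refine natDegree_mul_le.trans ?_
    have h1 : (Lagrange.basisDivisor (x j) (x i)).natDegree ≤ 1 := by
      unfold Lagrange.basisDivisor; compute_degree
    have h2 : (1 + Polynomial.C ((x i - x j)⁻¹ / 2) * (X - Polynomial.C (x j))).natDegree ≤ 1 := by
      compute_degree
    omega
  · rw [card_high, smul_eq_mul, mul_comm]

open Polynomial in
lemma angS_self {n : ℕ} (x : Fin (2 * n) → ℝ) (hx : StrictMono x) (j : Fin (2 * n))
    (hj : (j : ℕ) < n) : (angS x j).eval (x j) = 1 := by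
  unfold angS
  rw [eval_prod]
  refine Finset.prod_eq_one fun i hi => ?_
  have hij : x j ≠ x i := by
    intro h
    have := hx.injective h
    subst this
    simp at hi; omega
  rw [eval_mul, Lagrange.eval_basisDivisor_left_of_ne hij]
  simp

open Polynomial in
lemma angW_nonneg {n : ℕ} (x : Fin (2 * n) → ℝ) (j : Fin (2 * n)) (t : ℝ)
    (hxj : ∀ i : Fin (2 * n), n ≤ (i : ℕ) → x j < x i)
    (ht : ∀ i : Fin (2 * n), n ≤ (i : ℕ) → t ≤ x i) :
    0 ≤ (angW x j).eval t := by
  unfold angW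
  rw [eval_prod]
  refine Finset.prod_nonneg fun i hi => ?_
  have hi' : n ≤ (i : ℕ) := by simpa using hi
  simp only [Lagrange.basisDivisor, eval_mul, eval_C, eval_sub, eval_X]
  exact mul_nonneg_of_nonpos_of_nonpos
    (inv_nonpos.mpr (by linarith [hxj i hi'])) (by linarith [ht i hi'])

open Polynomial in
lemma angS_le {n : ℕ} (x : Fin (2 * n) → ℝ) (j : Fin (2 * n)) (t : ℝ)
    (hxj : ∀ i : Fin (2 * n), n ≤ (i : ℕ) → x j < x i)
    (ht : ∀ i : Fin (2 * n), n ≤ (i : ℕ) → t ≤ x i)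
    (ht' : ∀ i : Fin (2 * n), n ≤ (i : ℕ) → x j - t ≤ x i - x j) :
    ((angS x j).eval t) ^ 2 ≤ (angW x j).eval t := by
  unfold angW angS
  rw [eval_prod, eval_prod, ← Finset.prod_pow]
  refine Finset.prod_le_prod (fun i _ => sq_nonneg _) fun i hi => ?_
  have hi' : n ≤ (i : ℕ) := by simpa using hi
  have h1 := hxj i hi'
  have h2 := ht i hi'
  have h3 := ht' i hi'
  simp only [Lagrange.basisDivisor, eval_mul, eval_C, eval_sub, eval_X, eval_add, eval_one]
  have hd : 0 < x i - x j := by linarith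
  set u := (t - x j) / (x i - x j) with hu
  have e1 : (x j - x i)⁻¹ * (t - x i) = 1 - u := by
    have : x j - x i ≠ 0 := by linarith
    rw [hu]; field_simp; ring
  have e2 : (x i - x j)⁻¹ / 2 * (t - x j) = u / 2 := by rw [hu]; field_simp
  rw [e1, e2]
  have u1 : u ≤ 1 := by rw [hu, div_le_one hd]; linarith
  have u2 : -1 ≤ u := by rw [hu, le_div_iff₀ hd]; linarith
  have : (1 - u) - ((1 - u) * (1 + u / 2)) ^ 2 = (1 - u) * (u ^ 2 * (3 + u) / 4) := by ring
  have h5 : 0 ≤ (1 - u) * (u ^ 2 * (3 + u) / 4) :=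
    mul_nonneg (by linarith) (by have := sq_nonneg u; have : 0 ≤ 3 + u := by linarith
                                 positivity)
  linarith

lemma dens_le (μ : Measure ℝ) (U I : Set ℝ) (hU : IsOpen U) (hIU : I ⊆ U)
    (ρ : ℝ → ENNReal) (h : μ.restrict U = (volume.restrict U).withDensity ρ)
    (κ : ℝ) (hκ : ∀ t ∈ U, ENNReal.ofReal κ ≤ ρ t) :
    ENNReal.ofReal κ • volume.restrict I ≤ μ.restrict I := by
  have h1 : ENNReal.ofReal κ • volume.restrict U ≤ μ.restrict U := by
    rw [h, ← withDensity_const]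
    refine withDensity_mono ?_
    filter_upwards [ae_restrict_mem hU.measurableSet] with t ht using hκ t ht
  have h2 := Measure.restrict_mono_measure h1 I
  rw [Measure.restrict_smul, Measure.restrict_restrict_of_subset hIU,
    Measure.restrict_restrict_of_subset hIU] at h2
  exact h2

/-- **Uniform lower bound `λ_{j,2n}^{(1)} ≥ C₁/n` on compact subsets where the density
of `μ₁` is bounded below.**  If `J₁ = [c₀,d₀] ⊆ (a₁,b₁)` and `μ₁` is absolutely
continuous in an open neighborhood of `J₁` with density bounded below by a positive
constant there, then there is `C₁ > 0`, independent of `j` and `n`, with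
`λ_{j,2n}^{(1)} ≥ C₁/n` whenever `x_{j,2n} ∈ J₁`. -/
theorem angelesco_weight_lower_bound_C_over_n
    (μ₁ μ₂ : Measure ℝ) [IsFiniteMeasure μ₁] [IsFiniteMeasure μ₂]
    (a₁ b₁ a₂ b₂ : ℝ) (hab₁ : a₁ < b₁) (hgap : b₁ ≤ a₂) (hab₂ : a₂ < b₂)
    (hsupp₁ : μ₁ (Set.Icc a₁ b₁)ᶜ = 0) (hsupp₂ : μ₂ (Set.Icc a₂ b₂)ᶜ = 0)
    (hinf₁ : ∀ s : Finset ℝ, μ₁ ((s : Set ℝ))ᶜ ≠ 0)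
    (hinf₂ : ∀ s : Finset ℝ, μ₂ ((s : Set ℝ))ᶜ ≠ 0)
    (hmom₁ : ∀ k : ℕ, Integrable (fun t : ℝ => t ^ k) μ₁)
    (hmom₂ : ∀ k : ℕ, Integrable (fun t : ℝ => t ^ k) μ₂)
    (c₀ d₀ : ℝ) (hc₀d₀ : c₀ ≤ d₀) (hJ : Set.Icc c₀ d₀ ⊆ Set.Ioo a₁ b₁)
    (hac : ∃ U : Set ℝ, IsOpen U ∧ Set.Icc c₀ d₀ ⊆ U ∧
      ∃ ρ : ℝ → ENNReal, μ₁.restrict U = (volume.restrict U).withDensity ρ ∧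
        ∃ κ : ℝ, 0 < κ ∧ ∀ t ∈ U, ENNReal.ofReal κ ≤ ρ t) :
    ∃ C₁ > (0 : ℝ), ∀ n : ℕ, 1 ≤ n → ∀ ad : Angelesco μ₁ μ₂ a₁ b₁ a₂ b₂ n,
      ∀ j : Fin (2 * n), (j : ℕ) < n → ad.x j ∈ Set.Icc c₀ d₀ →
        C₁ / n ≤ qweight ad μ₁ j := by
  obtain ⟨U, hU, hJU, ρ, hρ, κ, hκ, hκρ⟩ := hac
  obtain ⟨δ₀, hδ₀, hδU⟩ := (isCompact_Icc (a := c₀) (b := d₀)).exists_cthickening_subset_open hU hJU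
  have hd₀ : d₀ < b₁ := (hJ (Set.right_mem_Icc.mpr hc₀d₀)).2
  set δ := min δ₀ (b₁ - d₀) with hδdef
  have hδ : 0 < δ := lt_min hδ₀ (by linarith)
  refine ⟨κ * δ / 6, by positivity, ?_⟩
  intro n hn ad j hj hxJ
  have hxj : ∀ i : Fin (2 * n), n ≤ (i : ℕ) → ad.x j < ad.x i := by
    intro i hi
    exact ad.mono (Fin.lt_def.mpr (by omega))
  have hxi : ∀ i : Fin (2 * n), n ≤ (i : ℕ) → b₁ ≤ ad.x i := by
    intro i hi
    linarith [(ad.mem2 i hi).1]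
  rw [qweight_eq hmom₁ ad j hj]
  set R := angR ad.x j with hR
  set W := angW ad.x j with hW
  set S := angS ad.x j with hS
  set f : ℝ → ℝ := fun t => (R.eval t) ^ 2 * W.eval t with hf
  have hfint : Integrable f μ₁ := by
    have := poly_integrable _ hmom₁ (R ^ 2 * W)
    simpa using this
  have hfnn : 0 ≤ᵐ[μ₁] f := by
    have : ∀ᵐ t ∂μ₁, t ∈ Set.Icc a₁ b₁ := hsupp₁
    filter_upwards [this] with t ht
    exact mul_nonneg (sq_nonneg _)
      (angW_nonneg _ _ _ hxj fun i hi => ht.2.trans (hxi i hi))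
  set I := Set.Ioc (ad.x j - δ) (ad.x j + δ) with hI
  have hIU : I ⊆ U := by
    intro t ht
    apply hδU
    refine Metric.mem_cthickening_of_dist_le t (ad.x j) δ₀ _ hxJ ?_
    rw [Real.dist_eq, abs_le]
    have := min_le_left δ₀ (b₁ - d₀)
    constructor <;> linarith [ht.1, ht.2]
  have hle := dens_le μ₁ U I hU hIU ρ hρ κ hκρ
  have s1 : ∫ t in I, f t ∂μ₁ ≤ ∫ t, f t ∂μ₁ :=
    integral_mono_measure Measure.restrict_le_self hfnn hfint
  have s2 : ∫ t, f t ∂(ENNReal.ofReal κ • volume.restrict I) ≤ ∫ t in I, f t ∂μ₁ :=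
    integral_mono_measure hle (ae_restrict_of_ae hfnn) hfint.restrict
  rw [integral_smul_measure, ENNReal.toReal_ofReal hκ.le, smul_eq_mul] at s2
  have s3 : ∫ t in I, ((R * S).eval t) ^ 2 ≤ ∫ t in I, f t := by
    refine setIntegral_mono_on ?_ ?_ measurableSet_Ioc ?_
    · exact (by fun_prop : Continuous fun t : ℝ => ((R * S).eval t) ^ 2).integrableOn_Ioc
    · exact (by fun_prop : Continuous f).integrableOn_Ioc
    · intro t ht
      have hδ2 := min_le_right δ₀ (b₁ - d₀)
      rw [hf, Polynomial.eval_mul, mul_pow]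
      refine mul_le_mul_of_nonneg_left (angS_le _ _ _ hxj ?_ ?_) (sq_nonneg _)
      · intro i hi
        linarith [hxi i hi, ht.2, hxJ.2]
      · intro i hi
        linarith [hxi i hi, ht.1, hxJ.2]
  have hRd : R.natDegree = n - 1 := by
    have := Lagrange.degree_basis (s := Finset.univ.filter (fun i : Fin (2 * n) => (i : ℕ) < n))
      (v := ad.x) (i := j) (ad.mono.injective.injOn) (by simpa using hj)
    rw [card_low] at this
    exact Polynomial.natDegree_eq_of_degree_eq_some this
  have hR1 : R.eval (ad.x j) = 1 :=
    Lagrange.eval_basis_self (ad.mono.injective.injOn) (by simpa using hj)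
  have hS1 : S.eval (ad.x j) = 1 := angS_self _ ad.mono _ hj
  have hd : (R * S).natDegree ≤ 3 * n := by
    refine Polynomial.natDegree_mul_le.trans ?_
    have : S.natDegree ≤ 2 * n := angS_natDegree ad.x j
    omega
  have s4 := leb_point' (3 * n) (R * S) hd (ad.x j) δ hδ
  rw [intervalIntegral.integral_of_le (by linarith), Polynomial.eval_mul, hR1, hS1] at s4
  have hn' : (1 : ℝ) ≤ n := by exact_mod_cast hn
  have hnn : 0 ≤ ∫ t in I, ((R * S).eval t) ^ 2 := integral_nonneg fun t => sq_nonneg _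
  have s5 : δ ≤ 6 * n * ∫ t in I, ((R * S).eval t) ^ 2 := by
    have e : ((3 * n : ℕ) : ℝ) + 3 ≤ 6 * n := by push_cast; linarith
    have := mul_le_mul_of_nonneg_right e hnn
    rw [← hI] at s4
    linarith
  refine le_trans ?_ (s2.trans s1)
  refine le_trans ?_ (mul_le_mul_of_nonneg_left s3 hκ.le)
  rw [div_le_iff₀ (by linarith)]
  have := mul_le_mul_of_nonneg_left s5 hκ.le
  linarith
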